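/- Let M : S → ℂ with M(1) = 1, let L be its admissible cumulants, and let M{z,w}, L{z,w} ∈ A(S) be the moment and cumulant generating functions. Then δM{z,w} = δL^{⋆}{z,w} ⋆ M{z,w} in A(S), where L^{⋆}{z,w} = (L{z,w})_{⋆ M{z,0}} and δf = f − f{z,0}; explicitly, for every word s containing at least one w, M(s)/n(s)! = Σ_{tv=s} δL^{⋆}{z,w}(t) · M{z,w}(v). -/

import Mathlib

/-- The two-letter alphabet `{z, w}`. -/
inductive Letter | z | w
deriving DecidableEq

/-- Words: elements of the free monoid `S = FS({z,w})`. -/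
abbrev Word := List Letter

/-- The convolution product of the semigroup algebra `A(S)`:
`(f ⋆ g)(s) = Σ_{uv = s} f(u) g(v)`. -/
noncomputable def conv (f g : Word → ℂ) (s : Word) : ℂ :=
  ∑ i ∈ Finset.range (s.length + 1), f (s.take i) * g (s.drop i)

/-- `G` is the prefix-accumulating form of the composition `f_{⋆g}` of Definition 6.2:
`G(pre, s) = f(pre ++ s)` if `s` has no `w`, and if `s = z^a w^k rest` with `k ≥ 1`
maximal, the leading `z`-run of `s` is split in all possible ways, each removed part
`z^{a-c}` contributing a factor `g(z^{a-c})`.  Then `f_{⋆g}(s) = G([], s)`. -/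
def IsStarAux (f g : Word → ℂ) (G : Word → Word → ℂ) : Prop :=
  (∀ pre s : Word, Letter.w ∉ s → G pre s = f (pre ++ s)) ∧
    ∀ (pre : Word) (a k : ℕ) (rest : Word), 1 ≤ k → rest.head? ≠ some Letter.w →
      G pre (List.replicate a Letter.z ++ List.replicate k Letter.w ++ rest) =
        ∑ c ∈ Finset.range (a + 1),
          g (List.replicate (a - c) Letter.z) *
            G (pre ++ List.replicate c Letter.z ++ List.replicate k Letter.w) rest

/-- `n(s)! = n₁!n₂!⋯n_p!` for `s = z^{n₁} w^{k₁} z^{n₂} ⋯ w^{k_{p−1}} z^{n_p}`: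
the product of the factorials of the lengths of the maximal `z`-runs of `s`. -/
def nFact (s : Word) : ℕ :=
  ((s.splitOn Letter.w).map fun r => r.length.factorial).prod

/-- `s` is a partition of the index set of a word into blocks; see `IsCumulants`. -/
def letterAt (s : Word) (j : ℕ) : Letter := s.getD j Letter.z

/-- `P` is a partition of the finite set of positions `g ⊆ ℕ` into nonempty blocks. -/
def IsPartitionOn (g : Finset ℕ) (P : Finset (Finset ℕ)) : Prop :=
  (∀ b ∈ P, b.Nonempty) ∧ (P : Set (Finset ℕ)).PairwiseDisjoint id ∧ P.sup id = g

/-- The position `j` is inner with respect to the block `b`. -/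
def InnerPos (j : ℕ) (b : Finset ℕ) : Prop :=
  j ∉ b ∧ ∃ i ∈ b, ∃ k ∈ b, i < j ∧ j < k

/-- A partition is admissible if no block contains a letter `w` that is inner
with respect to another block. -/
def Admissible (s : Word) (P : Finset (Finset ℕ)) : Prop :=
  ∀ b ∈ P, ∀ b' ∈ P, b ≠ b' → ∀ j ∈ b, letterAt s j = Letter.w → ¬ InnerPos j b'

open scoped Classical in
/-- The set `AP(s)` of admissible partitions of the positions `g` of the word `s`. -/
noncomputable def APfin (s : Word) (g : Finset ℕ) : Finset (Finset (Finset ℕ)) :=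
  g.powerset.powerset.filter fun P => IsPartitionOn g P ∧ Admissible s P

/-- The subword of `s` determined by a set of positions `b`. -/
def wordOf (s : Word) (b : Finset ℕ) : Word :=
  (b.sort (· ≤ ·)).map (letterAt s)

/-- `L` is the family of admissible cumulants of the moment function `M`. -/
def IsCumulants (M L : Word → ℂ) : Prop :=
  ∀ s : Word, s ≠ [] →
    M s = ∑ P ∈ APfin s (Finset.range s.length), ∏ b ∈ P, L (wordOf s b)

/-- The moment generating function `M{z,w}(s) = M(s)/n(s)!`. -/
noncomputable def genFun (M : Word → ℂ) (s : Word) : ℂ := M s / (nFact s : ℂ)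

open scoped Classical in
/-- The restriction `f{z,0}` of `f` to `S(z)`, extended by `0`. -/
noncomputable def restrZ (f : Word → ℂ) (s : Word) : ℂ :=
  if Letter.w ∈ s then 0 else f s

open scoped Classical in
/-- `δf = f − f{z,0}`. -/
noncomputable def deltaF (f : Word → ℂ) (s : Word) : ℂ :=
  if Letter.w ∈ s then f s else 0


namespace Aux

open Finset

open scoped Classical in
/-- The weighted sum over all set partitions of `h`. -/
noncomputable def Z (f : Finset ℕ → ℂ) (h : Finset ℕ) : ℂ :=
  ∑ P ∈ h.powerset.powerset.filter (fun P => IsPartitionOn h P), ∏ b ∈ P, f b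

theorem part_sub {h : Finset ℕ} {P : Finset (Finset ℕ)} (hP : IsPartitionOn h P)
    {b : Finset ℕ} (hb : b ∈ P) : b ⊆ h := by
  have := hP.2.2
  rw [← this]
  exact Finset.le_sup (f := id) hb

theorem part_mem {h : Finset ℕ} {P : Finset (Finset ℕ)} :
    P ∈ h.powerset.powerset ∧ IsPartitionOn h P ↔ IsPartitionOn h P := by
  refine ⟨fun h => h.2, fun hP => ⟨?_, hP⟩⟩
  rw [Finset.mem_powerset]
  intro b hb
  exact Finset.mem_powerset.2 (part_sub hP hb)

theorem part_iff {h : Finset ℕ} {P : Finset (Finset ℕ)} :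
    IsPartitionOn h P ↔ (∀ b ∈ P, b.Nonempty) ∧
      (∀ b ∈ P, ∀ c ∈ P, ∀ x, x ∈ b → x ∈ c → b = c) ∧ (∀ x, x ∈ h ↔ ∃ b ∈ P, x ∈ b) := by
  unfold IsPartitionOn
  refine and_congr Iff.rfl (and_congr ?_ ?_)
  · constructor
    · intro H b hb c hc x hxb hxc
      by_contra hne
      exact Finset.disjoint_left.1 (H hb hc hne) hxb hxc
    · intro H b hb c hc hne
      exact Finset.disjoint_left.2 fun x hx hx' => hne (H b hb c hc x hx hx')
  · rw [Finset.ext_iff]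
    simp only [Finset.mem_sup, id]
    exact forall_congr' fun x => Iff.comm

theorem Z_congr {f f' : Finset ℕ → ℂ} {h : Finset ℕ} (H : ∀ b ⊆ h, f b = f' b) :
    Z f h = Z f' h := by
  classical
  unfold Z
  refine Finset.sum_congr rfl fun P hP => Finset.prod_congr rfl fun b hb => H b ?_
  exact part_sub (Finset.mem_filter.1 hP).2 hb

theorem Z_empty (f : Finset ℕ → ℂ) : Z f ∅ = 1 := by
  classical
  unfold Z
  rw [Finset.sum_eq_single ∅]
  · simp
  · intro P hP hne
    exfalso
    have h := (Finset.mem_filter.1 hP).2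
    obtain ⟨b, hb⟩ := Finset.nonempty_iff_ne_empty.2 hne
    obtain ⟨x, hx⟩ := h.1 b hb
    exact absurd (part_sub h hb hx) (by simp)
  · intro h
    exfalso
    apply h
    rw [Finset.mem_filter, part_mem, part_iff]
    simp

theorem Z_rec (f : Finset ℕ → ℂ) (h : Finset ℕ) (i : ℕ) (hi : i ∈ h) :
    Z f h = ∑ b ∈ h.powerset.filter (fun b => i ∈ b), f b * Z f (h \ b) := by
  classical
  have h1 : Z f h = ∑ P ∈ h.powerset.powerset.filter (fun P => IsPartitionOn h P),
      ∑ b ∈ h.powerset.filter (fun b => i ∈ b), if b ∈ P then ∏ b ∈ P, f b else 0 := by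
    unfold Z
    refine Finset.sum_congr rfl fun P hP => ?_
    have hP := (Finset.mem_filter.1 hP).2
    have hP' := part_iff.1 hP
    obtain ⟨b, hb, hib⟩ := (hP'.2.2 i).1 hi
    rw [Finset.sum_eq_single b]
    · rw [if_pos hb]
    · intro c hc hne
      rw [if_neg]
      intro hcP
      exact hne (hP'.2.1 c hcP b hb i (Finset.mem_filter.1 hc).2 hib)
    · intro hn
      exact absurd (Finset.mem_filter.2 ⟨Finset.mem_powerset.2 (part_sub hP hb), hib⟩) hn
  rw [h1, Finset.sum_comm]
  refine Finset.sum_congr rfl fun b hb => ?_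
  rw [Finset.mem_filter, Finset.mem_powerset] at hb
  obtain ⟨hbh, hib⟩ := hb
  rw [← Finset.sum_filter]
  unfold Z
  rw [Finset.mul_sum]
  refine Finset.sum_nbij' (fun P => P.erase b) (fun Q => insert b Q) ?_ ?_ ?_ ?_ ?_
  · intro P hP
    rw [Finset.mem_filter, Finset.mem_filter, part_mem, part_iff] at hP
    rw [Finset.mem_filter, part_mem, part_iff]
    obtain ⟨⟨p1, p2, p3⟩, hbP⟩ := hP
    refine ⟨fun c hc => p1 c (Finset.mem_of_mem_erase hc), fun c hc d hd => 
      p2 c (Finset.mem_of_mem_erase hc) d (Finset.mem_of_mem_erase hd), fun x => ?_⟩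
    rw [Finset.mem_sdiff, p3]
    constructor
    · rintro ⟨⟨c, hc, hx⟩, hxb⟩
      exact ⟨c, Finset.mem_erase.2 ⟨fun e => hxb (e ▸ hx), hc⟩, hx⟩
    · rintro ⟨c, hc, hx⟩
      rw [Finset.mem_erase] at hc
      exact ⟨⟨c, hc.2, hx⟩, fun hxb => hc.1 (p2 c hc.2 b hbP x hx hxb)⟩
  · intro Q hQ
    rw [Finset.mem_filter, part_mem, part_iff] at hQ
    rw [Finset.mem_filter, Finset.mem_filter, part_mem, part_iff]
    obtain ⟨p1, p2, p3⟩ := hQ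
    have key : ∀ c ∈ Q, ∀ x ∈ c, x ∉ b := fun c hc x hx =>
      (Finset.mem_sdiff.1 ((p3 x).2 ⟨c, hc, hx⟩)).2
    refine ⟨⟨?_, ?_, ?_⟩, Finset.mem_insert_self _ _⟩
    · intro c hc
      rcases Finset.mem_insert.1 hc with rfl | hc
      · exact ⟨i, hib⟩
      · exact p1 c hc
    · intro c hc d hd x hxc hxd
      rcases Finset.mem_insert.1 hc with h1 | h1 <;> rcases Finset.mem_insert.1 hd with h2 | h2
      · rw [h1, h2]
      · exact absurd (h1 ▸ hxc) (key d h2 x hxd)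
      · exact absurd (h2 ▸ hxd) (key c h1 x hxc)
      · exact p2 c h1 d h2 x hxc hxd
    · intro x
      have := p3 x
      rw [Finset.mem_sdiff] at this
      simp only [Finset.mem_insert, exists_eq_or_imp, ← this]
      have := @hbh x
      tauto
  · intro P hP
    exact Finset.insert_erase (Finset.mem_filter.1 hP).2
  · intro Q hQ
    rw [Finset.mem_filter, part_mem, part_iff] at hQ
    refine Finset.erase_insert fun hbQ => ?_
    exact (Finset.mem_sdiff.1 ((hQ.2.2 i).2 ⟨b, hbQ, hib⟩)).2 hib
  · intro P hP
    exact (Finset.mul_prod_erase P f (Finset.mem_filter.1 hP).2).symm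

theorem Z_mul (f : Finset ℕ → ℂ) (h2 : Finset ℕ) : ∀ (n : ℕ) (h1 : Finset ℕ), h1.card = n →
    Disjoint h1 h2 →
    (∀ b ⊆ h1 ∪ h2, ∀ x ∈ b, ∀ y ∈ b, x ∈ h1 → y ∈ h2 → f b = 0) →
    Z f (h1 ∪ h2) = Z f h1 * Z f h2 := by
  intro n
  induction n using Nat.strong_induction_on with
  | _ n ih =>
  intro h1 hn hd hf
  rcases h1.eq_empty_or_nonempty with rfl | ⟨i, hi⟩
  · rw [Z_empty, Finset.empty_union, one_mul]
  rw [Z_rec f (h1 ∪ h2) i (Finset.mem_union_left _ hi), Z_rec f h1 i hi, Finset.sum_mul]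
  symm
  have hss : (h1.powerset.filter (fun b => i ∈ b)) ⊆
      ((h1 ∪ h2).powerset.filter (fun b => i ∈ b)) := by
    intro b hb
    rw [Finset.mem_filter, Finset.mem_powerset] at hb ⊢
    exact ⟨hb.1.trans Finset.subset_union_left, hb.2⟩
  rw [← Finset.sum_subset hss]
  · refine Finset.sum_congr rfl fun b hb => ?_
    rw [Finset.mem_filter, Finset.mem_powerset] at hb
    have e : (h1 ∪ h2) \ b = (h1 \ b) ∪ h2 := by
      rw [Finset.union_sdiff_distrib]
      congr 1
      exact Finset.sdiff_eq_self_of_disjoint (hd.mono_left hb.1).symm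
    rw [e, ih (h1 \ b).card ?_ (h1 \ b) rfl (hd.mono_left Finset.sdiff_subset), mul_assoc]
    · intro c hc x hx y hy hx1 hy2
      exact hf c (hc.trans (Finset.union_subset_union_left Finset.sdiff_subset)) x hx y hy
        (Finset.mem_sdiff.1 hx1).1 hy2
    · rw [← hn]
      refine Finset.card_lt_card (Finset.ssubset_iff_of_subset Finset.sdiff_subset |>.2 ?_)
      exact ⟨i, hi, by simp [hb.2]⟩
  · intro b hb hnb
    rw [Finset.mem_filter, Finset.mem_powerset] at hb hnb
    have : ¬ b ⊆ h1 := fun h => hnb ⟨h, hb.2⟩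
    obtain ⟨y, hy, hy1⟩ := Finset.not_subset.1 this
    have hy2 : y ∈ h2 := (Finset.mem_union.1 (hb.1 hy)).resolve_left hy1
    rw [hf b hb.1 i hb.2 y hy hi hy2, zero_mul]

theorem Z_map (f : Finset ℕ → ℂ) (e : ℕ ↪ ℕ) : ∀ (n : ℕ) (h : Finset ℕ), h.card = n →
    Z f (h.map e) = Z (fun b => f (b.map e)) h := by
  intro n
  induction n using Nat.strong_induction_on with
  | _ n ih =>
  intro h hn
  rcases h.eq_empty_or_nonempty with rfl | ⟨i, hi⟩
  · rw [Finset.map_empty, Z_empty, Z_empty]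
  rw [Z_rec f (h.map e) (e i) (Finset.mem_map_of_mem e hi), Z_rec _ h i hi]
  symm
  refine Finset.sum_bij (fun b _ => b.map e) ?_ ?_ ?_ ?_
  · intro b hb
    rw [Finset.mem_filter, Finset.mem_powerset] at hb ⊢
    exact ⟨Finset.map_subset_map.2 hb.1, Finset.mem_map_of_mem e hb.2⟩
  · intro b _ c _ hbc
    exact Finset.map_injective e hbc
  · intro b hb
    rw [Finset.mem_filter, Finset.mem_powerset] at hb
    obtain ⟨c, hc, rfl⟩ := Finset.subset_map_iff.1 hb.1
    exact ⟨c, Finset.mem_filter.2 ⟨Finset.mem_powerset.2 hc, by simpa using hb.2⟩, rfl⟩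
  · intro b hb
    rw [Finset.mem_filter, Finset.mem_powerset] at hb
    rw [← ih (h \ b).card ?_ (h \ b) rfl, Finset.map_sdiff]
    rw [← hn]
    refine Finset.card_lt_card (Finset.ssubset_iff_of_subset Finset.sdiff_subset |>.2 ?_)
    exact ⟨i, hi, by simp [hb.2]⟩

/-- No position of `W` is inner with respect to `b`. -/
def Good (W b : Finset ℕ) : Prop := ∀ j ∈ W, ¬ InnerPos j b

open scoped Classical in
/-- The weight of a block. -/
noncomputable def wt (L : Word → ℂ) (s : Word) (W b : Finset ℕ) : ℂ :=
  if Good W b then L (wordOf s b) else 0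

/-- positions of `w` inside `g`. -/
def wpos (s : Word) (g : Finset ℕ) : Finset ℕ := g.filter fun j => letterAt s j = Letter.w

theorem adm_iff {s : Word} {g : Finset ℕ} {P : Finset (Finset ℕ)} (hP : IsPartitionOn g P) :
    Admissible s P ↔ ∀ b ∈ P, Good (wpos s g) b := by
  have hP' := part_iff.1 hP
  unfold Admissible Good wpos
  constructor
  · intro H b hb j hj hin
    rw [Finset.mem_filter] at hj
    obtain ⟨c, hc, hjc⟩ := (hP'.2.2 j).1 hj.1
    exact H c hc b hb (fun e => hin.1 (e ▸ hjc)) j hjc hj.2 hin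
  · intro H b hb c hc _ j hj hw
    exact H c hc j (Finset.mem_filter.2 ⟨part_sub hP hb hj, hw⟩)

theorem sum_AP (L : Word → ℂ) (s : Word) (g : Finset ℕ) :
    ∑ P ∈ APfin s g, ∏ b ∈ P, L (wordOf s b) = Z (wt L s (wpos s g)) g := by
  classical
  unfold APfin Z
  rw [← Finset.filter_filter, Finset.sum_filter]
  refine Finset.sum_congr (by congr) fun P hP => ?_
  have hP := (Finset.mem_filter.1 hP).2
  unfold wt
  rw [Finset.prod_ite_zero]
  simp only [adm_iff hP]

theorem moment_eq {M L : Word → ℂ} (hM1 : M [] = 1) (hL : IsCumulants M L) (s : Word) :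
    M s = Z (wt L s (wpos s (range s.length))) (range s.length) := by
  by_cases hs : s = []
  · subst hs
    simp [Z_empty, hM1]
  · rw [hL s hs, sum_AP]

theorem exists_emb (g : Finset ℕ) : ∃ e : ℕ ↪o ℕ, (range g.card).map e.toEmbedding = g := by
  refine ⟨OrderEmbedding.ofStrictMono (fun i => if h : i < g.card then g.orderEmbOfFin rfl ⟨i, h⟩
    else g.sup id + 1 + i) ?_, ?_⟩
  · intro i j hij
    dsimp only
    split_ifs with h1 h2 h2
    · simpa using hij
    · have : g.orderEmbOfFin rfl ⟨i, h1⟩ ≤ g.sup id :=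
        Finset.le_sup (f := id) (Finset.orderEmbOfFin_mem g rfl _)
      omega
    · omega
    · omega
  · ext x
    simp only [Finset.mem_map, Finset.mem_range]
    constructor
    · rintro ⟨i, hi, rfl⟩
      have : (if h : i < g.card then g.orderEmbOfFin rfl ⟨i, h⟩ else g.sup id + 1 + i) ∈ g := by
        rw [dif_pos hi]
        exact Finset.orderEmbOfFin_mem g rfl _
      exact this
    · intro hx
      have : x ∈ Set.range (g.orderEmbOfFin rfl) := by
        rw [Finset.range_orderEmbOfFin]; exact hx
      obtain ⟨i, rfl⟩ := this
      exact ⟨i, i.2, dif_pos i.2⟩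

theorem sort_map (e : ℕ ↪o ℕ) (b : Finset ℕ) :
    (b.map e.toEmbedding).sort (· ≤ ·) = (b.sort (· ≤ ·)).map e := by
  refine List.Perm.eq_of_pairwise (le := (· ≤ ·)) ?_ (Finset.pairwise_sort _ _) ?_ ?_
  · intro a b _ _ h1 h2
    exact le_antisymm h1 h2
  · rw [List.pairwise_map]
    exact (Finset.pairwise_sort b (· ≤ ·)).imp fun h => by simpa using h
  · rw [← Multiset.coe_eq_coe, Finset.sort_eq, ← Multiset.map_coe, Finset.sort_eq]
    rfl

theorem wordOf_append (s : Word) (A B : Finset ℕ) (h : ∀ a ∈ A, ∀ b ∈ B, a < b) :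
    wordOf s (A ∪ B) = wordOf s A ++ wordOf s B := by
  unfold wordOf
  rw [← List.map_append]
  congr 1
  refine List.Perm.eq_of_pairwise (le := (· ≤ ·)) ?_ (Finset.pairwise_sort _ _) ?_ ?_
  · intro a b _ _ h1 h2
    exact le_antisymm h1 h2
  · rw [List.pairwise_append]
    refine ⟨Finset.pairwise_sort _ _, Finset.pairwise_sort _ _, fun a ha b hb => ?_⟩
    exact (h a ((Finset.mem_sort _).1 ha) b ((Finset.mem_sort _).1 hb)).le
  · rw [← Multiset.coe_eq_coe, Finset.sort_eq, ← Multiset.coe_add, Finset.sort_eq, Finset.sort_eq]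
    have hd : Disjoint A B := Finset.disjoint_left.2 fun x hx hx' => lt_irrefl _ (h x hx x hx')
    rw [← Finset.disjUnion_eq_union A B hd]
    rfl

theorem wordOf_singleton (s : Word) (j : ℕ) : wordOf s {j} = [letterAt s j] := by
  simp [wordOf]

theorem wordOf_empty (s : Word) : wordOf s ∅ = [] := by
  simp [wordOf]

theorem wordOf_length (s : Word) (b : Finset ℕ) : (wordOf s b).length = b.card := by
  simp [wordOf]

theorem mem_wordOf (s : Word) (b : Finset ℕ) (x : Letter) :
    x ∈ wordOf s b ↔ ∃ j ∈ b, letterAt s j = x := by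
  simp [wordOf]

theorem wordOf_z (s : Word) (b : Finset ℕ) (h : ∀ j ∈ b, letterAt s j = Letter.z) :
    wordOf s b = List.replicate b.card Letter.z := by
  rw [List.eq_replicate_iff]
  refine ⟨wordOf_length s b, fun x hx => ?_⟩
  obtain ⟨j, hj, rfl⟩ := (mem_wordOf s b x).1 hx
  exact h j hj

theorem wordOf_Ico (p r : Word) :
    wordOf (p ++ r) (Ico p.length (p ++ r).length) = r := by
  induction r generalizing p with
  | nil => simp [wordOf_empty]
  | cons x r ih =>
    have e : Ico p.length (p ++ x :: r).length =
        {p.length} ∪ Ico (p ++ [x]).length ((p ++ [x]) ++ r).length := by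
      ext y; simp; omega
    have e2 : p ++ x :: r = (p ++ [x]) ++ r := by simp
    rw [e, wordOf_append, wordOf_singleton, e2, ih]
    · simp [letterAt]
    · simp; omega

theorem inner_map (e : ℕ ↪o ℕ) (j : ℕ) (b : Finset ℕ) :
    InnerPos (e j) (b.map e.toEmbedding) ↔ InnerPos j b := by
  simp [InnerPos]

/-- Transport to the subword, with extra harmless barriers. -/
theorem Z_sub {M L : Word → ℂ} (hM1 : M [] = 1) (hL : IsCumulants M L) (s : Word)
    (W g : Finset ℕ) (h1 : ∀ x ∈ g, letterAt s x = Letter.w → x ∈ W)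
    (h2 : ∀ x ∈ W, x ∈ g → letterAt s x = Letter.w)
    (h3 : ∀ x ∈ W, x ∉ g → (∀ y ∈ g, x < y) ∨ (∀ y ∈ g, y < x)) :
    Z (wt L s W) g = M (wordOf s g) := by
  classical
  rw [moment_eq hM1 hL (wordOf s g), wordOf_length]
  obtain ⟨e, he⟩ := exists_emb g
  have hlet : ∀ i < g.card, letterAt (wordOf s g) i = letterAt s (e i) := by
    intro i hi
    have : wordOf s g = (List.range g.card).map (fun i => letterAt s (e i)) := by
      conv_lhs => rw [← he]
      unfold wordOf
      rw [sort_map, List.map_map, Finset.sort_range]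
      rfl
    rw [letterAt, this]
    simp [hi]
  have hg : Z (wt L s W) g = Z (wt L s W) ((range g.card).map e.toEmbedding) := by rw [he]
  rw [hg, Z_map _ _ _ _ rfl]
  apply Z_congr
  intro b hb
  unfold wt
  have hw : wordOf s (b.map e.toEmbedding) = wordOf (wordOf s g) b := by
    unfold wordOf
    rw [sort_map, List.map_map]
    refine List.map_congr_left fun i hi => ?_
    exact (hlet i (Finset.mem_range.1 (hb ((Finset.mem_sort _).1 hi)))).symm
  have hbg : b.map e.toEmbedding ⊆ g := by
    conv_rhs => rw [← he]
    exact Finset.map_subset_map.2 hb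
  have hgood : Good W (b.map e.toEmbedding) ↔ Good (wpos (wordOf s g) (range g.card)) b := by
    constructor
    · intro H j hj hin
      rw [wpos, Finset.mem_filter] at hj
      have hjg : e j ∈ g := by
        rw [← he]; exact Finset.mem_map_of_mem e.toEmbedding hj.1
      rw [hlet j (Finset.mem_range.1 hj.1)] at hj
      exact H (e j) (h1 _ hjg hj.2) ((inner_map e j b).2 hin)
    · intro H x hx hin
      by_cases hxg : x ∈ g
      · have hxw := h2 x hx hxg
        rw [← he] at hxg
        obtain ⟨j, hj, rfl⟩ := Finset.mem_map.1 hxg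
        refine H j ?_ ((inner_map e j b).1 hin)
        rw [wpos, Finset.mem_filter]
        refine ⟨hj, ?_⟩
        rw [hlet j (Finset.mem_range.1 hj)]
        exact hxw
      · obtain ⟨_, i, hi, k, hk, h4, h5⟩ := hin
        rcases h3 x hx hxg with h | h
        · exact absurd (h i (hbg hi)) (by omega)
        · exact absurd (h k (hbg hk)) (by omega)
  rw [hw]
  simp only [hgood]

/-- Word-level recursion for the sum over the block containing the first `w`. -/
noncomputable def F (M L : Word → ℂ) : Word → Word → ℕ → ℂ
  | [], pre, q => if Letter.w ∈ pre then L pre * M (List.replicate q Letter.z) else 0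
  | Letter.z :: s, pre, q => F M L s (pre ++ [Letter.z]) q + F M L s pre (q + 1)
  | Letter.w :: s, pre, q => M (List.replicate q Letter.z) * F M L s (pre ++ [Letter.w]) 0 +
      if Letter.w ∈ pre then L pre * M (List.replicate q Letter.z ++ Letter.w :: s) else 0

/-- Sum over the blocks `b` containing `i` and extending `b0` to the right of `j`. -/
noncomputable def X (L : Word → ℂ) (s : Word) (i : ℕ) (b0 : Finset ℕ) (l j : ℕ) : ℂ :=
  ∑ c ∈ (Ico j s.length).powerset, if i ∈ b0 ∪ c then
    wt L s (wpos s (range s.length)) (b0 ∪ c) *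
      Z (wt L s (wpos s (range s.length))) (Ico l s.length \ (b0 ∪ c)) else 0

/-- The block ends with `b0`. -/
theorem close_term {M L : Word → ℂ} (hM1 : M [] = 1) (hL : IsCumulants M L) (p r s : Word)
    (hs : s = p ++ r) (i : ℕ) (hil : i < s.length)
    (hiw : letterAt s i = Letter.w) (hi : ∀ x < i, letterAt s x = Letter.z)
    (b0 : Finset ℕ) (l : ℕ) (hb : b0 ⊆ range p.length) (hl : l ≤ p.length)
    (hz : ∀ x, l ≤ x → x < p.length → letterAt s x = Letter.z)
    (hw : ∀ x < p.length, letterAt s x = Letter.w → x ∈ b0) :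
    (if i ∈ b0 then wt L s (wpos s (range s.length)) b0 *
      Z (wt L s (wpos s (range s.length))) (Ico l s.length \ b0) else 0) =
    if Letter.w ∈ wordOf s b0 then L (wordOf s b0) *
      M (List.replicate (Ico l p.length \ b0).card Letter.z ++ r) else 0 := by
  have hlen : p.length ≤ s.length := by rw [hs]; simp
  have hiff : i ∈ b0 ↔ Letter.w ∈ wordOf s b0 := by
    rw [mem_wordOf]
    constructor
    · intro h
      exact ⟨i, h, hiw⟩
    · rintro ⟨j, hj, hjw⟩
      have h1 : ¬ j < i := fun h => by rw [hi j h] at hjw; cases hjw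
      have h2 := Finset.mem_range.1 (hb hj)
      exact hw i (by omega) hiw
  simp only [hiff]
  split_ifs with hc
  swap
  · rfl
  congr 1
  · unfold wt
    rw [if_pos]
    intro x hx hin
    obtain ⟨hx1, a, ha, k, hk, h1, h2⟩ := hin
    have := Finset.mem_range.1 (hb hk)
    exact hx1 (hw x (by omega) (Finset.mem_filter.1 hx).2)
  · rw [Z_sub hM1 hL]
    · have e : Ico l s.length \ b0 = (Ico l p.length \ b0) ∪ Ico p.length s.length := by
        ext x
        have := @hb x
        simp only [Finset.mem_sdiff, Finset.mem_union, Finset.mem_Ico, Finset.mem_range] at *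
        grind
      rw [e, wordOf_append, wordOf_z]
      · congr 2
        subst hs
        exact wordOf_Ico p r
      · intro x hx
        simp only [Finset.mem_sdiff, Finset.mem_Ico] at hx
        exact hz x hx.1.1 hx.1.2
      · intro a ha b hb
        simp only [Finset.mem_sdiff, Finset.mem_Ico] at ha hb
        omega
    · intro x hx hxw
      simp only [Finset.mem_sdiff, Finset.mem_Ico] at hx
      exact Finset.mem_filter.2 ⟨Finset.mem_range.2 hx.1.2, hxw⟩
    · intro x hx _
      exact (Finset.mem_filter.1 hx).2
    · intro x hx hxg
      left
      intro y hy
      have hx := Finset.mem_filter.1 hx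
      have hxn := Finset.mem_range.1 hx.1
      simp only [Finset.mem_sdiff, Finset.mem_Ico] at hxg hy
      by_contra hlt
      have hxl : l ≤ x := by omega
      have hxb : x ∈ b0 := by
        by_contra h
        exact hxg ⟨⟨hxl, hxn⟩, h⟩
      have := hz x hxl (Finset.mem_range.1 (hb hxb))
      rw [this] at hx
      cases hx.2

theorem wt_zero (L : Word → ℂ) (s : Word) {W b : Finset ℕ} (h : ¬ Good W b) :
    wt L s W b = 0 := if_neg h

set_option maxHeartbeats 1000000 in
theorem X_eq {M L : Word → ℂ} (hM1 : M [] = 1) (hL : IsCumulants M L) (s : Word)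
    (i : ℕ) (hil : i < s.length)
    (hiw : letterAt s i = Letter.w) (hi : ∀ x < i, letterAt s x = Letter.z) (r : Word) :
    ∀ (p : Word), s = p ++ r → ∀ (b0 : Finset ℕ) (l : ℕ), b0 ⊆ range p.length → l ≤ p.length →
    (∀ x, l ≤ x → x < p.length → letterAt s x = Letter.z) →
    (∀ x < p.length, letterAt s x = Letter.w → x ∈ b0) →
    X L s i b0 l p.length = F M L r (wordOf s b0) (Ico l p.length \ b0).card := by
  induction r with
  | nil =>
    intro p hs b0 l hb hl hz hw
    have h := close_term hM1 hL p [] s hs i hil hiw hi b0 l hb hl hz hw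
    have hlen : s.length = p.length := by rw [hs]; simp
    unfold X F
    rw [← hlen, Finset.Ico_self, Finset.powerset_empty, Finset.sum_singleton, Finset.union_empty, h,
      hlen, List.append_nil]
  | cons a r ih =>
    intro p hs b0 l hb hl hz hw
    have hlen : p.length < s.length := by rw [hs]; simp
    have hs' : s = (p ++ [a]) ++ r := by rw [hs]; simp
    have hp' : (p ++ [a]).length = p.length + 1 := by simp
    have hlet : letterAt s p.length = a := by rw [hs]; simp [letterAt]
    have hpb : p.length ∉ b0 := fun h => by simpa using hb h
    have hIco : Ico p.length s.length = insert p.length (Ico (p.length + 1) s.length) := by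
      ext x; simp; omega
    have hw1 : wordOf s (insert p.length b0) = wordOf s b0 ++ [a] := by
      have e : insert p.length b0 = b0 ∪ {p.length} := by
        ext x; simp
      rw [e, wordOf_append, wordOf_singleton, hlet]
      intro x hx y hy
      have := Finset.mem_range.1 (hb hx)
      simp at hy
      omega
    have hb1 : b0 ⊆ range (p.length + 1) := hb.trans (by simp)
    have hb2 : insert p.length b0 ⊆ range (p.length + 1) := by
      intro x hx
      rcases Finset.mem_insert.1 hx with rfl | hx
      · simp
      · exact hb1 hx
    have hins : ∀ c : Finset ℕ, b0 ∪ insert p.length c = insert p.length b0 ∪ c := by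
      intro c; ext x; simp
    have hX : X L s i b0 l p.length = 
      (∑ c ∈ (Ico (p.length + 1) s.length).powerset, if i ∈ b0 ∪ c then
    wt L s (wpos s (range s.length)) (b0 ∪ c) *
      Z (wt L s (wpos s (range s.length))) (Ico l s.length \ (b0 ∪ c)) else 0) +
      X L s i (insert p.length b0) l (p.length + 1) := by
      unfold X
      rw [hIco, Finset.sum_powerset_insert (by simp)]
      simp only [hins]
    cases a with
    | z =>
      have i1 := ih (p ++ [Letter.z]) hs' b0 l (by rw [hp']; exact hb1) (by omega)
        (by
          intro x h1 h2
          rcases Nat.lt_or_ge x p.length with h | h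
          · exact hz x h1 h
          · have : x = p.length := by omega
            rw [this, hlet])
        (by
          intro x h1 h2
          rcases Nat.lt_or_ge x p.length with h | h
          · exact hw x h h2
          · have : x = p.length := by omega
            rw [this, hlet] at h2
            cases h2)
      have i2 := ih (p ++ [Letter.z]) hs' (insert p.length b0) l (by rw [hp']; exact hb2) (by omega)
        (by
          intro x h1 h2
          rcases Nat.lt_or_ge x p.length with h | h
          · exact hz x h1 h
          · have : x = p.length := by omega
            rw [this, hlet])
        (by
          intro x h1 h2
          rcases Nat.lt_or_ge x p.length with h | h
          · exact Finset.mem_insert_of_mem (hw x h h2)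
          · have : x = p.length := by omega
            rw [this, hlet] at h2
            cases h2)
      rw [hp'] at i1 i2
      have e1 : Ico l (p.length + 1) \ insert p.length b0 = Ico l p.length \ b0 := by
        ext x; simp; grind
      have e2 : Ico l (p.length + 1) \ b0 = insert p.length (Ico l p.length \ b0) := by
        ext x; simp; grind
      rw [e1, hw1] at i2
      rw [e2, Finset.card_insert_of_notMem (by simp)] at i1
      rw [hX, i2, F, ← i1, add_comm]
      rfl
    | w =>
      have hcl := close_term hM1 hL p (Letter.w :: r) s hs i hil hiw hi b0 l hb hl hz hw
      have hpW : p.length ∈ wpos s (range s.length) := 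
        Finset.mem_filter.2 ⟨Finset.mem_range.2 hlen, hlet⟩
      have i2 := ih (p ++ [Letter.w]) hs' (insert p.length b0) (p.length + 1)
        (by rw [hp']; exact hb2) (by omega)
        (by
          intro x h1 h2
          omega)
        (by
          intro x h1 h2
          rcases Nat.lt_or_ge x p.length with h | h
          · exact Finset.mem_insert_of_mem (hw x h h2)
          · have : x = p.length := by omega
            rw [this]
            simp)
      rw [hp', hw1] at i2
      rw [hX, F, ← hcl, add_comm]
      congr 1
      · have e0 : (Ico (p.length + 1) (p.length + 1) \ insert p.length b0).card = 0 := by simp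
        rw [e0] at i2
        rw [← i2]
        unfold X
        rw [Finset.mul_sum]
        refine Finset.sum_congr rfl fun c hc => ?_
        rw [Finset.mem_powerset] at hc
        split_ifs with hic
        swap
        · simp
        have es : Ico l s.length \ (insert p.length b0 ∪ c) =
            (Ico l p.length \ b0) ∪ (Ico (p.length + 1) s.length \ (insert p.length b0 ∪ c)) := by
          ext x
          have h1 := @hc x
          have h2 := @hb x
          simp only [Finset.mem_sdiff, Finset.mem_union, Finset.mem_Ico, Finset.mem_insert,
            Finset.mem_range] at *
          grind
        rw [es, Z_mul _ _ _ _ rfl, Z_sub hM1 hL, wordOf_z]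
        · ring
        · intro x hx
          simp only [Finset.mem_sdiff, Finset.mem_Ico] at hx
          exact hz x hx.1.1 hx.1.2
        · intro x hx hxw
          simp only [Finset.mem_sdiff, Finset.mem_Ico] at hx
          exact Finset.mem_filter.2 ⟨Finset.mem_range.2 (by omega), hxw⟩
        · intro x hx _
          exact (Finset.mem_filter.1 hx).2
        · intro x hx hxg
          have hx := Finset.mem_filter.1 hx
          rcases Nat.lt_or_ge x l with h | h
          · left
            intro y hy
            simp only [Finset.mem_sdiff, Finset.mem_Ico] at hy
            omega
          · right
            intro y hy
            simp only [Finset.mem_sdiff, Finset.mem_Ico] at hy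
            by_contra hlt
            have := hz x h (by omega)
            rw [this] at hx
            cases hx.2
        · rw [Finset.disjoint_left]
          intro x hx hx'
          simp only [Finset.mem_sdiff, Finset.mem_Ico] at hx hx'
          omega
        · intro b hbs x hx y hy hx1 hy2
          refine wt_zero L s fun hgood => ?_
          simp only [Finset.mem_sdiff, Finset.mem_Ico] at hx1 hy2
          refine hgood _ hpW ⟨fun h => ?_, x, hx, y, hy, by omega, by omega⟩
          have := hbs h
          simp at this
      · rw [Finset.sum_eq_single ∅]
        · rw [Finset.union_empty]
        · intro c hc hne
          rw [Finset.mem_powerset] at hc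
          split_ifs with hic
          swap
          · rfl
          have hpc : p.length ∉ b0 ∪ c := by
            intro h
            rcases Finset.mem_union.1 h with h | h
            · exact hpb h
            · simpa using hc h
          have hip : i < p.length := by
            by_contra hge
            have h1 : ¬ p.length < i := fun h => by
              rw [hi _ h] at hlet; cases hlet
            have : i = p.length := by omega
            exact hpc (this ▸ hic)
          obtain ⟨y, hy⟩ := Finset.nonempty_iff_ne_empty.2 hne
          rw [wt_zero L s, zero_mul]
          intro hgood
          have hy' := hc hy
          rw [Finset.mem_Ico] at hy'
          exact hgood _ hpW ⟨hpc, i, hic, y, Finset.mem_union_right _ hy, hip, by omega⟩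
        · intro h
          exact absurd (Finset.empty_mem_powerset _) h

theorem moment_F {M L : Word → ℂ} (hM1 : M [] = 1) (hL : IsCumulants M L) (s : Word)
    (hs : Letter.w ∈ s) : M s = F M L s [] 0 := by
  have hex : ∃ i, i < s.length ∧ letterAt s i = Letter.w := by
    obtain ⟨i, hi, h⟩ := List.mem_iff_getElem.1 hs
    exact ⟨i, hi, by simp [letterAt, hi, h]⟩
  obtain ⟨i, h1, h2⟩ : ∃ i, (i < s.length ∧ letterAt s i = Letter.w) ∧
      ∀ x < i, ¬ (x < s.length ∧ letterAt s x = Letter.w) := by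
    classical
    exact ⟨Nat.find hex, Nat.find_spec hex, fun x hx => Nat.find_min hex hx⟩
  have h3 : ∀ x < i, letterAt s x = Letter.z := by
    intro x hx
    have := h2 x hx
    cases h : letterAt s x with
    | z => rfl
    | w => exact absurd ⟨hx.trans h1.1, h⟩ this
  have := X_eq hM1 hL s i h1.1 h1.2 h3 s [] rfl ∅ 0
    (Finset.empty_subset _) (Nat.zero_le _) (fun x _ h => absurd h (Nat.not_lt_zero x))
    (fun x h => absurd h (Nat.not_lt_zero x))
  have hm := moment_eq hM1 hL s
  have hr := Z_rec (wt L s (wpos s (range s.length))) (range s.length) i (Finset.mem_range.2 h1.1)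
  rw [hm, hr]
  simp only [wordOf_empty, List.length_nil, Finset.Ico_self, Finset.empty_sdiff,
    Finset.card_empty] at this
  rw [← this]
  unfold X
  have e : Ico 0 s.length = range s.length := by ext x; simp
  rw [e, ← Finset.sum_filter]
  simp only [Finset.empty_union]

theorem nFact_nil : nFact [] = 1 := by
  simp [nFact]

theorem nFact_z (a : ℕ) : nFact (List.replicate a Letter.z) = a.factorial := by
  have h : (List.replicate a Letter.z).splitOn Letter.w = [List.replicate a Letter.z] :=
    List.splitOn_eq_singleton (by simp [List.mem_replicate])
  simp [nFact, h]

theorem nFact_mul (x y : Word) : nFact (x ++ Letter.w :: y) = nFact x * nFact y := by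
  unfold nFact
  rw [List.splitOn_append_cons_of_beq x y (beq_self_eq_true _), List.map_append, List.prod_append]

theorem nFact_ne (x : Word) : (nFact x : ℂ) ≠ 0 := by
  rw [Nat.cast_ne_zero]
  unfold nFact
  apply List.prod_ne_zero
  simp only [List.mem_map, not_exists, not_and]
  exact fun r _ => Nat.factorial_ne_zero _

theorem F_run (M L : Word → ℂ) (s : Word) (a : ℕ) : ∀ (pre : Word) (q : ℕ),
    F M L (List.replicate a Letter.z ++ s) pre q = ∑ c ∈ range (a + 1),
      (a.choose c : ℂ) * F M L s (pre ++ List.replicate c Letter.z) (q + (a - c)) := by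
  induction a with
  | zero => intro pre q; simp
  | succ a ih =>
    intro pre q
    have h := Finset.sum_antidiagonal_choose_succ_mul
      (fun i j => F M L s (pre ++ List.replicate i Letter.z) (q + j)) a
    rw [Finset.Nat.sum_antidiagonal_eq_sum_range_succ (fun i j => ((a + 1).choose i : ℂ) *
      F M L s (pre ++ List.replicate i Letter.z) (q + j)),
      Finset.Nat.sum_antidiagonal_eq_sum_range_succ (fun i j => (a.choose i : ℂ) *
      F M L s (pre ++ List.replicate i Letter.z) (q + (j + 1))),
      Finset.Nat.sum_antidiagonal_eq_sum_range_succ (fun i j => (a.choose j : ℂ) *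
      F M L s (pre ++ List.replicate (i + 1) Letter.z) (q + j))] at h
    rw [h, List.replicate_succ, List.cons_append, F, ih, ih, add_comm]
    congr 1
    · refine Finset.sum_congr rfl fun c _ => ?_
      congr 2
      omega
    · refine Finset.sum_congr rfl fun c hc => ?_
      rw [Nat.choose_symm (by simp at hc; omega), List.append_assoc]
      rfl

theorem G_step {f g : Word → ℂ} {G : Word → Word → ℂ} (hG : IsStarAux f g G) (hg : g [] = 1)
    (pre : Word) (a : ℕ) (t : Word) :
    G pre (List.replicate a Letter.z ++ Letter.w :: t) = ∑ c ∈ range (a + 1),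
      g (List.replicate (a - c) Letter.z) * G (pre ++ List.replicate c Letter.z ++ [Letter.w]) t := by
  obtain ⟨k, rest, ht, hr⟩ : ∃ (k : ℕ) (rest : Word), t = List.replicate k Letter.w ++ rest ∧
      rest.head? ≠ some Letter.w := by
    induction t with
    | nil => exact ⟨0, [], by simp, by simp⟩
    | cons x t ih =>
      cases x with
      | z => exact ⟨0, Letter.z :: t, by simp, by simp⟩
      | w =>
        obtain ⟨k, rest, h, hr⟩ := ih
        exact ⟨k + 1, rest, by rw [h]; rfl, hr⟩
  have e : List.replicate a Letter.z ++ Letter.w :: t =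
      List.replicate a Letter.z ++ List.replicate (k + 1) Letter.w ++ rest := by
    rw [ht, List.append_assoc]; rfl
  rw [e, hG.2 pre a (k + 1) rest (by omega) hr]
  refine Finset.sum_congr rfl fun c _ => ?_
  congr 1
  rcases Nat.eq_zero_or_pos k with rfl | hk
  · rw [ht]; rfl
  · have h := hG.2 (pre ++ List.replicate c Letter.z ++ [Letter.w]) 0 k rest hk hr
    simp only [List.replicate_zero, List.nil_append, zero_add, Finset.sum_range_one, Nat.sub_self,
      hg, one_mul, List.append_nil] at h
    rw [ht, h, List.append_assoc _ [Letter.w]]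
    rfl

theorem decomp (s : Word) : (∃ a, s = List.replicate a Letter.z) ∨
    ∃ a s', s = List.replicate a Letter.z ++ Letter.w :: s' := by
  induction s with
  | nil => exact Or.inl ⟨0, rfl⟩
  | cons x s ih =>
    cases x with
    | w => exact Or.inr ⟨0, s, rfl⟩
    | z =>
      rcases ih with ⟨a, h⟩ | ⟨a, s', h⟩
      · exact Or.inl ⟨a + 1, by rw [h]; rfl⟩
      · exact Or.inr ⟨a + 1, s', by rw [h]; rfl⟩

theorem main {M L : Word → ℂ} (hM1 : M [] = 1) 
    (Lgen : Word → ℂ) (hLgen' : ∀ s : Word, s ≠ [] → Lgen s = L s / (nFact s : ℂ))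
    (G : Word → Word → ℂ) (hG : IsStarAux Lgen (restrZ (genFun M)) G) : ∀ (n : ℕ) (s : Word),
    s.length = n → ∀ (pre : Word), (∀ y, nFact (pre ++ y) = nFact pre * nFact y) →
    F M L s pre 0 / (nFact pre * nFact s) = ∑ i ∈ range (s.length + 1),
      (if Letter.w ∈ pre ++ s.take i then G pre (s.take i) else 0) * genFun M (s.drop i) := by
  have hgz : ∀ n, restrZ (genFun M) (List.replicate n Letter.z) =
      M (List.replicate n Letter.z) / n.factorial := by
    intro n
    unfold restrZ genFun
    rw [if_neg (by simp [List.mem_replicate]), nFact_z]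
  have hg1 : restrZ (genFun M) [] = 1 := by
    have := hgz 0
    simpa [hM1] using this
  -- the terms where the word `t` consists of `z` only
  have hGz : ∀ (pre : Word) (c : ℕ), (∀ y, nFact (pre ++ y) = nFact pre * nFact y) →
      Letter.w ∈ pre → G pre (List.replicate c Letter.z) =
        L (pre ++ List.replicate c Letter.z) / (nFact pre * c.factorial) := by
    intro pre c hpre hw
    rw [hG.1 _ _ (by simp [List.mem_replicate]), hLgen', hpre, nFact_z, Nat.cast_mul]
    intro h
    rw [List.append_eq_nil_iff] at h
    rw [h.1] at hw
    cases hw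
  have hmem : ∀ (pre : Word) (c : ℕ), Letter.w ∈ pre ++ List.replicate c Letter.z ↔
      Letter.w ∈ pre := by
    intro pre c
    simp [List.mem_replicate]
  have hfac : ∀ a c : ℕ, c ∈ range (a + 1) → (a.choose c : ℂ) =
      a.factorial / (c.factorial * (a - c).factorial) := by
    intro a c hc
    have hc := Finset.mem_range.1 hc
    rw [Nat.cast_choose ℂ (by omega : c ≤ a)]
  have fne : ∀ n : ℕ, (n.factorial : ℂ) ≠ 0 := fun n => by
    exact_mod_cast Nat.factorial_ne_zero n
  intro n
  induction n using Nat.strong_induction_on with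
  | _ n ih =>
  intro s hn pre hpre
  have pne := nFact_ne pre
  rcases decomp s with ⟨a, rfl⟩ | ⟨a, s', rfl⟩
  · have h := F_run M L [] a pre 0
    rw [List.append_nil] at h
    rw [h, Finset.sum_div, List.length_replicate, nFact_z]
    refine Finset.sum_congr rfl fun c hc => ?_
    have hca := Finset.mem_range.1 hc
    rw [List.take_replicate, List.drop_replicate, Nat.min_eq_left (by omega), F]
    simp only [hmem]
    split_ifs with hw
    · rw [hGz pre c hpre hw, genFun, nFact_z, hfac a c hc, Nat.zero_add]
      have := fne a
      have := fne c
      have := fne (a - c)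
      field_simp
    · simp
  · have sne := nFact_ne s'
    have hlen : (List.replicate a Letter.z ++ Letter.w :: s').length + 1 =
        (a + 1) + (s'.length + 1) := by simp; omega
    rw [F_run, hlen, Finset.sum_range_add _ (a + 1) (s'.length + 1), nFact_mul, nFact_z,
      Finset.sum_div]
    have h2 : ∑ k ∈ range (s'.length + 1),
        (if Letter.w ∈ pre ++ (List.replicate a Letter.z ++ Letter.w :: s').take (a + 1 + k)
        then G pre ((List.replicate a Letter.z ++ Letter.w :: s').take (a + 1 + k)) else 0) *
        genFun M ((List.replicate a Letter.z ++ Letter.w :: s').drop (a + 1 + k)) =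
        ∑ c ∈ range (a + 1), ∑ k ∈ range (s'.length + 1),
          M (List.replicate (a - c) Letter.z) / (a - c).factorial *
            G (pre ++ List.replicate c Letter.z ++ [Letter.w]) (s'.take k) *
            genFun M (s'.drop k) := by
      rw [Finset.sum_comm]
      refine Finset.sum_congr rfl fun k _ => ?_
      have e1 : (List.replicate a Letter.z ++ Letter.w :: s').take (a + 1 + k) =
          List.replicate a Letter.z ++ Letter.w :: s'.take k := by
        rw [List.take_append, List.length_replicate, List.take_of_length_le (by simp; omega)]
        have : a + 1 + k - a = k + 1 := by omega
        rw [this, List.take_succ_cons]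
      have e2 : (List.replicate a Letter.z ++ Letter.w :: s').drop (a + 1 + k) = s'.drop k := by
        rw [List.drop_append, List.length_replicate, List.drop_of_length_le (by simp; omega)]
        have : a + 1 + k - a = k + 1 := by omega
        rw [this, List.drop_succ_cons, List.nil_append]
      rw [e1, e2, if_pos (by simp), G_step hG hg1, Finset.sum_mul]
      simp only [hgz]
    rw [h2, ← Finset.sum_add_distrib]
    refine Finset.sum_congr rfl fun c hc => ?_
    have hca := Finset.mem_range.1 hc
    have e1 : (List.replicate a Letter.z ++ Letter.w :: s').take c =
        List.replicate c Letter.z := by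
      rw [List.take_append_of_le_length (by simp; omega), List.take_replicate,
        Nat.min_eq_left (by omega)]
    have e2 : (List.replicate a Letter.z ++ Letter.w :: s').drop c =
        List.replicate (a - c) Letter.z ++ Letter.w :: s' := by
      rw [List.drop_append_of_le_length (by simp; omega), List.drop_replicate]
    have hn1 : nFact (pre ++ List.replicate c Letter.z ++ [Letter.w]) =
        nFact pre * c.factorial := by
      rw [nFact_mul, hpre, nFact_z, nFact_nil, mul_one]
    have i1 := ih s'.length (by rw [← hn]; simp; omega) s' rfl
      (pre ++ List.replicate c Letter.z ++ [Letter.w]) (by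
        intro y
        rw [hn1, List.append_assoc _ [Letter.w], List.singleton_append, nFact_mul, hpre, nFact_z])
    rw [hn1] at i1
    have i2 : ∑ k ∈ range (s'.length + 1),
          M (List.replicate (a - c) Letter.z) / (a - c).factorial *
            G (pre ++ List.replicate c Letter.z ++ [Letter.w]) (s'.take k) *
            genFun M (s'.drop k) = M (List.replicate (a - c) Letter.z) / (a - c).factorial *
            (F M L s' (pre ++ List.replicate c Letter.z ++ [Letter.w]) 0 /
              ((nFact pre * c.factorial : ℕ) * nFact s')) := by
      rw [i1, Finset.mul_sum]
      refine Finset.sum_congr rfl fun k _ => ?_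
      rw [if_pos (by simp), mul_assoc]
    rw [i2, e1, e2, F, hfac a c hc, Nat.zero_add]
    simp only [hmem]
    have := fne a
    have := fne c
    have := fne (a - c)
    push_cast
    split_ifs with hw
    · rw [hGz pre c hpre hw, genFun, nFact_mul, nFact_z]
      push_cast
      field_simp
      ring
    · field_simp
      ring

end Aux

/-- `δM{z,w} = δL^⋆{z,w} ⋆ M{z,w}` in `A(S)`, where
`L^⋆{z,w} = (L{z,w})_{⋆ M{z,0}}`.  Explicitly, for every word `s` containing at
least one `w`, `M(s)/n(s)! = Σ_{tv=s} δL^⋆{z,w}(t) · M{z,w}(v)`. -/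
theorem delta_moment_eq_deltaLstar_conv_moment (M L : Word → ℂ)
    (hM1 : M [] = 1) (hL : IsCumulants M L)
    (Lgen : Word → ℂ) (hLgen : Lgen [] = 0)
    (hLgen' : ∀ s : Word, s ≠ [] → Lgen s = L s / (nFact s : ℂ))
    (G : Word → Word → ℂ) (hG : IsStarAux Lgen (restrZ (genFun M)) G) :
    ∀ s : Word, deltaF (genFun M) s = conv (deltaF fun t => G [] t) (genFun M) s := by
  intro s
  by_cases hs : Letter.w ∈ s
  · have h := Aux.main hM1 Lgen hLgen' G hG s.length s rfl [] (by simp [Aux.nFact_nil])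
    unfold deltaF conv
    rw [if_pos hs, genFun, Aux.moment_F hM1 hL s hs]
    simp only [Aux.nFact_nil, Nat.cast_one, one_mul, List.nil_append] at h
    rw [h]
  · unfold deltaF conv
    rw [if_neg hs]
    symm
    refine Finset.sum_eq_zero fun i _ => ?_
    beta_reduce
    rw [if_neg (fun h => hs (List.mem_of_mem_take h)), zero_mul]
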